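/- Let v : ℝ × ℝ → ℝ be continuous and 1-periodic in its second argument, and suppose the partial derivative ∂₁v with respect to the first argument exists and is continuous on ℝ × ℝ. Let w : (0,1) × (−1/2, 1/2) → ℝ be defined by w(x♯, y) = y · (∂₁v)(x♯, y). For each positive integer N (with ε = 1/N) define, for x ∈ (0,1), S_N(x) = (Bv)(x) − (T*v)(x) − ε · (T*w)(x). Then N · ‖S_N‖_{L²(0,1)} → 0 as N → ∞. (This is the converse approximation Bv = T*v + ε T*(x¹ ∂v/∂x♯) + ε O_s(ε).) -/

import Mathlib

open Set MeasureTheory Filter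

/-- `Bv : x ↦ v(x, x/ε − 1/2)` with `ε = 1/N`. -/
noncomputable def smoothAdj (N : ℕ) (v : ℝ → ℝ → ℝ) (x : ℝ) : ℝ :=
  v x (x / (1 / (N : ℝ)) - 1 / 2)

/-- Adjoint two-scale transform:
`(T*v)(x) = (1/ε) ∫_{ε⌊x/ε⌋}^{ε(⌊x/ε⌋+1)} v(s, x/ε − ⌊x/ε⌋ − 1/2) ds`, `ε = 1/N`. -/
noncomputable def twoScaleAdj (N : ℕ) (v : ℝ → ℝ → ℝ) (x : ℝ) : ℝ :=
  (1 / (1 / (N : ℝ))) *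
    ∫ s in ((1 / (N : ℝ)) * (⌊x / (1 / (N : ℝ))⌋ : ℝ))..((1 / (N : ℝ)) * ((⌊x / (1 / (N : ℝ))⌋ : ℝ) + 1)),
      v s (x / (1 / (N : ℝ)) - (⌊x / (1 / (N : ℝ))⌋ : ℝ) - 1 / 2)

/-!
On a cell `[a, b]` of length `ε` with midpoint `m`, put `c = ⨍ f'` and `g s = f s - c * s`. Then
`f x - ⨍ f - (x - m) * ⨍ f' = g x - ⨍ g`. Since `c` is the mean of `f'`, the derivative of `g` is at
most the oscillation of `f'` on the cell, so `g x - ⨍ g` is at most `ε` times that oscillation. For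
`f = v(·, y)` with `y = (x - m) / ε` the left-hand side is the remainder of the approximation at
`x`, and the oscillation tends to `0` uniformly in `x` by uniform continuity of `∂₁v`.
-/

open scoped Interval Topology

section IntervalAverage

variable {E : Type*} [NormedAddCommGroup E] [NormedSpace ℝ E] [CompleteSpace E]

theorem intervalAverage_id_smul {a b : ℝ} (hab : a ≠ b) (c : E) :
    (⨍ s in a..b, s • c) = ((a + b) / 2) • c := by
  have hba : b - a ≠ 0 := sub_ne_zero.2 hab.symm
  rw [interval_average_eq, intervalIntegral.integral_smul_const, integral_id, smul_smul]
  congr 1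
  field_simp
  ring

theorem norm_intervalAverage_sub_le {f : ℝ → E} {a b C : ℝ} {w : E} (hab : a ≠ b)
    (hf : IntervalIntegrable f volume a b) (hC : ∀ s ∈ Ι a b, ‖f s - w‖ ≤ C) :
    ‖(⨍ s in a..b, f s) - w‖ ≤ C := by
  rw [← mem_closedBall_iff_norm]
  refine (convex_closedBall w C).set_average_mem Metric.isClosed_closedBall ?_ ?_ ?_
    (intervalIntegrable_iff.1 hf)
  · simpa [Real.volume_uIoc, sub_eq_zero] using hab.symm
  · simp [Real.volume_uIoc]
  · filter_upwards [ae_restrict_mem measurableSet_uIoc] with s hs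
    exact mem_closedBall_iff_norm.2 (hC s hs)

theorem norm_sub_intervalAverage_le_of_norm_deriv_le {f f' : ℝ → E} {a b x C : ℝ}
    (hab : a ≠ b) (hx : x ∈ [[a, b]])
    (hf : ∀ s ∈ [[a, b]], HasDerivWithinAt f (f' s) [[a, b]] s)
    (hC : ∀ s ∈ [[a, b]], ‖f' s‖ ≤ C) :
    ‖f x - ⨍ s in a..b, f s‖ ≤ C * |b - a| := by
  have hC₀ : 0 ≤ C := (norm_nonneg _).trans (hC x hx)
  have hfi : IntervalIntegrable f volume a b :=
    ContinuousOn.intervalIntegrable fun s hs => (hf s hs).continuousWithinAt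
  rw [norm_sub_rev]
  refine norm_intervalAverage_sub_le hab hfi fun s hs => ?_
  have hs' : s ∈ [[a, b]] := uIoc_subset_uIcc hs
  calc ‖f s - f x‖ ≤ C * ‖s - x‖ :=
        (convex_uIcc a b).norm_image_sub_le_of_norm_hasDerivWithin_le hf hC hx hs'
    _ ≤ C * |b - a| := by
        gcongr
        exact abs_sub_le_of_uIcc_subset_uIcc (uIcc_subset_uIcc hx hs')

theorem norm_sub_intervalAverage_sub_smul_intervalAverage_deriv_le {f f' : ℝ → E} {a b x η : ℝ}
    (hab : a ≠ b) (hx : x ∈ [[a, b]])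
    (hf : ∀ s ∈ [[a, b]], HasDerivWithinAt f (f' s) [[a, b]] s)
    (hf' : IntervalIntegrable f' volume a b)
    (hη : ∀ s ∈ [[a, b]], ∀ t ∈ [[a, b]], ‖f' s - f' t‖ ≤ η) :
    ‖f x - (⨍ s in a..b, f s) - (x - (a + b) / 2) • ⨍ s in a..b, f' s‖ ≤ η * |b - a| := by
  set c : E := ⨍ s in a..b, f' s
  set g : ℝ → E := fun s => f s - s • c with hg
  have hfi : IntervalIntegrable f volume a b :=
    ContinuousOn.intervalIntegrable fun s hs => (hf s hs).continuousWithinAt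
  have hci : IntervalIntegrable (fun s : ℝ => s • c) volume a b :=
    Continuous.intervalIntegrable (by fun_prop) a b
  have g_deriv : ∀ s ∈ [[a, b]], HasDerivWithinAt g (f' s - c) [[a, b]] s := fun s hs => by
    simpa only [hg, one_smul] using
      (hf s hs).fun_sub ((hasDerivAt_id' s).hasDerivWithinAt.smul_const c)
  have g_deriv_le : ∀ s ∈ [[a, b]], ‖f' s - c‖ ≤ η := fun s hs => by
    rw [norm_sub_rev]
    exact norm_intervalAverage_sub_le hab hf' fun t ht => hη t (uIoc_subset_uIcc ht) s hs
  have g_average : (⨍ s in a..b, g s) = (⨍ s in a..b, f s) - ((a + b) / 2) • c := by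
    rw [← intervalAverage_id_smul hab, interval_average_eq, interval_average_eq f,
      interval_average_eq (fun s => s • c), ← smul_sub, intervalIntegral.integral_sub hfi hci]
  calc ‖f x - (⨍ s in a..b, f s) - (x - (a + b) / 2) • c‖
      = ‖g x - ⨍ s in a..b, g s‖ := by
        rw [g_average, sub_smul]
        congr 1
        simp only [hg]
        abel
    _ ≤ η * |b - a| := norm_sub_intervalAverage_le_of_norm_deriv_le hab hx g_deriv g_deriv_le

end IntervalAverage

section Cells

/-- The left endpoint `ε⌊x/ε⌋` of the cell containing `x`, where `ε = 1/N`. -/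
noncomputable def cellLeft (N : ℕ) (x : ℝ) : ℝ := ⌊N * x⌋ / N

/-- The right endpoint `ε(⌊x/ε⌋ + 1)` of the cell containing `x`, where `ε = 1/N`. -/
noncomputable def cellRight (N : ℕ) (x : ℝ) : ℝ := (⌊N * x⌋ + 1) / N

/-- The microscopic coordinate `(x - x_c)/ε ∈ [-1/2, 1/2)` of `x` relative to the center `x_c` of
its cell, where `ε = 1/N`. -/
noncomputable def cellCoord (N : ℕ) (x : ℝ) : ℝ := Int.fract (N * x) - 1 / 2

variable {N : ℕ} {x : ℝ}

theorem cellRight_sub_cellLeft (N : ℕ) (x : ℝ) : cellRight N x - cellLeft N x = 1 / N := by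
  rw [cellRight, cellLeft]
  ring

theorem cellLeft_lt_cellRight (hN : 0 < N) (x : ℝ) : cellLeft N x < cellRight N x := by
  rw [← sub_pos, cellRight_sub_cellLeft]
  positivity

theorem mem_Icc_cell (hN : 0 < N) (x : ℝ) : x ∈ Icc (cellLeft N x) (cellRight N x) := by
  have hN' : (0 : ℝ) < N := Nat.cast_pos.2 hN
  exact ⟨(div_le_iff₀' hN').2 (Int.floor_le _), (le_div_iff₀' hN').2 (Int.lt_floor_add_one _).le⟩

theorem Icc_cell_subset_Icc (hN : 0 < N) (hx : x ∈ Ico (0 : ℝ) 1) :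
    Icc (cellLeft N x) (cellRight N x) ⊆ Icc 0 1 := by
  have hN' : (0 : ℝ) < N := Nat.cast_pos.2 hN
  have floor_nonneg : 0 ≤ ⌊N * x⌋ := Int.floor_nonneg.2 (mul_nonneg hN'.le hx.1)
  have floor_lt : ⌊N * x⌋ < N := Int.floor_lt.2 (mul_lt_of_lt_one_right hN' hx.2)
  apply Icc_subset_Icc
  · exact div_nonneg (Int.cast_nonneg floor_nonneg) hN'.le
  · exact (div_le_one hN').2 (by exact_mod_cast floor_lt)

theorem cellCoord_mem_Icc (N : ℕ) (x : ℝ) : cellCoord N x ∈ Icc (-1 / 2 : ℝ) (1 / 2) := by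
  rw [cellCoord]
  constructor <;> linarith [Int.fract_nonneg (N * x), Int.fract_lt_one (N * x)]

theorem sub_cell_midpoint (hN : 0 < N) (x : ℝ) :
    x - (cellLeft N x + cellRight N x) / 2 = 1 / N * cellCoord N x := by
  rw [cellLeft, cellRight, cellCoord, Int.fract]
  field

end Cells

section Remainder

variable {N : ℕ} {v v₁ : ℝ → ℝ → ℝ} {x : ℝ}

theorem smoothAdj_eq_of_periodic (N : ℕ) (hper : Function.Periodic (v x) 1) :
    smoothAdj N v x = v x (cellCoord N x) := by
  rw [smoothAdj, ← hper.sub_int_mul_eq ⌊N * x⌋, cellCoord, Int.fract]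
  congr 1
  simp only [one_div, div_inv_eq_mul]
  ring

theorem twoScaleAdj_eq_intervalAverage (N : ℕ) (v : ℝ → ℝ → ℝ) (x : ℝ) :
    twoScaleAdj N v x = ⨍ s in cellLeft N x..cellRight N x, v s (cellCoord N x) := by
  rw [interval_average_eq, cellRight_sub_cellLeft, twoScaleAdj, smul_eq_mul, cellLeft, cellRight,
    cellCoord, Int.fract]
  simp only [one_div, one_mul, inv_inv, div_inv_eq_mul, mul_comm x, inv_mul_eq_div (N : ℝ)]

/-- The remainder `S_N = Bv - T*v - ε T*(y v₁)` of the approximation of `B` by `T*`, where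
`ε = 1/N` and `v₁` stands for `∂₁v`. -/
noncomputable def twoScaleRemainder (N : ℕ) (v v₁ : ℝ → ℝ → ℝ) (x : ℝ) : ℝ :=
  smoothAdj N v x - twoScaleAdj N v x - 1 / N * twoScaleAdj N (fun xs y => y * v₁ xs y) x

theorem twoScaleRemainder_eq_sub_intervalAverage (hN : 0 < N) (v₁ : ℝ → ℝ → ℝ)
    (hper : Function.Periodic (v x) 1) :
    twoScaleRemainder N v v₁ x =
      v x (cellCoord N x) - (⨍ s in cellLeft N x..cellRight N x, v s (cellCoord N x)) -
        (x - (cellLeft N x + cellRight N x) / 2) •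
          ⨍ s in cellLeft N x..cellRight N x, v₁ s (cellCoord N x) := by
  rw [twoScaleRemainder, smoothAdj_eq_of_periodic N hper, twoScaleAdj_eq_intervalAverage,
    twoScaleAdj_eq_intervalAverage, sub_cell_midpoint hN, interval_average_eq (fun s => _ * _),
    intervalIntegral.integral_const_mul, interval_average_eq fun s => v₁ s _]
  simp only [smul_eq_mul]
  ring

theorem abs_twoScaleRemainder_le {η : ℝ} (hN : 0 < N) (hper : Function.Periodic (v x) 1)
    (hd : ∀ s ∈ Icc (cellLeft N x) (cellRight N x),
      HasDerivWithinAt (fun t => v t (cellCoord N x)) (v₁ s (cellCoord N x))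
        (Icc (cellLeft N x) (cellRight N x)) s)
    (hv₁_int : IntervalIntegrable (fun s => v₁ s (cellCoord N x)) volume
      (cellLeft N x) (cellRight N x))
    (hη : ∀ s ∈ Icc (cellLeft N x) (cellRight N x), ∀ t ∈ Icc (cellLeft N x) (cellRight N x),
      |v₁ s (cellCoord N x) - v₁ t (cellCoord N x)| ≤ η) :
    |twoScaleRemainder N v v₁ x| ≤ η * (1 / N) := by
  have hcell := cellLeft_lt_cellRight hN x
  have hx := mem_Icc_cell hN x
  rw [← uIcc_of_le hcell.le] at hd hη hx
  have hlen : |cellRight N x - cellLeft N x| = 1 / N := by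
    rw [cellRight_sub_cellLeft, abs_of_nonneg (by positivity)]
  rw [twoScaleRemainder_eq_sub_intervalAverage hN v₁ hper, ← hlen]
  exact norm_sub_intervalAverage_sub_smul_intervalAverage_deriv_le hcell.ne hx hd hv₁_int hη

theorem tendstoUniformlyOn_mul_twoScaleRemainder
    (hper : ∀ x ∈ Ioo (0 : ℝ) 1, Function.Periodic (v x) 1)
    (hd : ∀ x ∈ Icc (0 : ℝ) 1, ∀ y ∈ Icc (-1 / 2 : ℝ) (1 / 2),
      HasDerivWithinAt (fun s => v s y) (v₁ x y) (Icc 0 1) x)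
    (hv₁ : ContinuousOn (fun p : ℝ × ℝ => v₁ p.1 p.2) (Icc 0 1 ×ˢ Icc (-1 / 2) (1 / 2))) :
    TendstoUniformlyOn (fun (N : ℕ) x => N * twoScaleRemainder N v v₁ x) (fun _ => 0) atTop
      (Ioo 0 1) := by
  rw [Metric.tendstoUniformlyOn_iff]
  intro r hr
  obtain ⟨δ, hδ, hosc⟩ := Metric.uniformContinuousOn_iff_le.1
    ((isCompact_Icc.prod isCompact_Icc).uniformContinuousOn_of_continuous hv₁) (r / 2)
    (half_pos hr)
  filter_upwards [eventually_gt_atTop 0,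
    tendsto_one_div_atTop_nhds_zero_nat.eventually_le_const hδ] with N hN hNδ x hx
  have hcell : Icc (cellLeft N x) (cellRight N x) ⊆ Icc 0 1 :=
    Icc_cell_subset_Icc hN (Ioo_subset_Ico_self hx)
  have hy := cellCoord_mem_Icc N x
  have hv₁_int : IntervalIntegrable (fun s => v₁ s (cellCoord N x)) volume
      (cellLeft N x) (cellRight N x) := by
    apply ContinuousOn.intervalIntegrable_of_Icc (cellLeft_lt_cellRight hN x).le
    exact hv₁.comp (by fun_prop : Continuous fun s : ℝ => (s, cellCoord N x)).continuousOn
      fun s hs => ⟨hcell hs, hy⟩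
  have hbound : |twoScaleRemainder N v v₁ x| ≤ r / 2 * (1 / N) := by
    refine abs_twoScaleRemainder_le hN (hper x hx)
      (fun s hs => (hd s (hcell hs) _ hy).mono hcell) hv₁_int fun s hs t ht => ?_
    refine hosc (s, cellCoord N x) ⟨hcell hs, hy⟩ (t, cellCoord N x) ⟨hcell ht, hy⟩ ?_
    calc dist (s, cellCoord N x) (t, cellCoord N x) = dist s t := dist_prod_same_right
      _ ≤ cellRight N x - cellLeft N x := Real.dist_le_of_mem_Icc hs ht
      _ ≤ δ := by rwa [cellRight_sub_cellLeft]
  rw [dist_zero_left, norm_mul, Real.norm_natCast, Real.norm_eq_abs]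
  calc N * |twoScaleRemainder N v v₁ x| ≤ N * (r / 2 * (1 / N)) := by gcongr
    _ = r / 2 := by field
    _ < r := half_lt_self hr

end Remainder

theorem tendsto_setIntegral_zero_of_tendstoUniformlyOn {ι α E : Type*} [MeasurableSpace α]
    [NormedAddCommGroup E] [NormedSpace ℝ E] {μ : Measure α} {s : Set α} {l : Filter ι}
    {F : ι → α → E} (hs : μ s < ⊤) (hF : TendstoUniformlyOn F (fun _ => 0) l s) :
    Tendsto (fun i => ∫ x in s, F i x ∂μ) l (𝓝 0) := by
  rw [Metric.tendsto_nhds]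
  intro r hr
  have hC : 0 < r / (μ.real s + 1) := by positivity
  filter_upwards [Metric.tendstoUniformlyOn_iff.1 hF _ hC] with i hi
  rw [dist_zero_right]
  calc ‖∫ x in s, F i x ∂μ‖ ≤ r / (μ.real s + 1) * μ.real s :=
        norm_setIntegral_le_of_norm_le_const hs fun x hx => by
          simpa only [dist_zero_left] using (hi x hx).le
    _ < r / (μ.real s + 1) * (μ.real s + 1) := by gcongr; exact lt_add_one _
    _ = r := by field

theorem tendsto_sqrt_setIntegral_sq_zero_of_tendstoUniformlyOn {ι α : Type*} [MeasurableSpace α]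
    {μ : Measure α} {s : Set α} {l : Filter ι} {F : ι → α → ℝ} (hs : μ s < ⊤)
    (hF : TendstoUniformlyOn F (fun _ => 0) l s) :
    Tendsto (fun i => √(∫ x in s, F i x ^ 2 ∂μ)) l (𝓝 0) := by
  have hF_sq : TendstoUniformlyOn (fun i x => F i x ^ 2) (fun _ => 0) l s := by
    rw [← tendsto_prod_principal_iff] at hF ⊢
    exact zero_pow (M₀ := ℝ) two_ne_zero ▸ hF.pow 2
  have hF_integral := tendsto_setIntegral_zero_of_tendstoUniformlyOn hs hF_sq
  simpa only [Real.sqrt_zero] using hF_integral.sqrt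

theorem approximation_B_by_Tstar_general (v v₁ : ℝ → ℝ → ℝ)
    (hper : ∀ x ∈ Ioo (0 : ℝ) 1, ∀ y : ℝ, v x (y + 1) = v x y)
    (hd : ∀ x ∈ Icc (0 : ℝ) 1, ∀ y ∈ Icc (-1 / 2 : ℝ) (1 / 2),
      HasDerivWithinAt (fun s => v s y) (v₁ x y) (Icc 0 1) x)
    (hv₁ : ContinuousOn (fun p : ℝ × ℝ => v₁ p.1 p.2) (Icc 0 1 ×ˢ Icc (-1 / 2) (1 / 2))) :
    Tendsto (fun N : ℕ => (N : ℝ) *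
        √(∫ x in Ioo (0 : ℝ) 1, twoScaleRemainder N v v₁ x ^ 2)) atTop (𝓝 0) := by
  have huniform := tendstoUniformlyOn_mul_twoScaleRemainder hper hd hv₁
  refine (tendsto_sqrt_setIntegral_sq_zero_of_tendstoUniformlyOn (μ := volume)
    measure_Ioo_lt_top huniform).congr fun N => ?_
  simp only [mul_pow]
  rw [integral_const_mul, Real.sqrt_mul (by positivity), Real.sqrt_sq (Nat.cast_nonneg N)]

/-- **Approximation of B by T\*.** If `v` is continuous, 1-periodic in its
second argument, with continuous partial derivative `v₁ = ∂₁v`, and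
`w(x♯,y) = y ∂₁v(x♯,y)`, then `Bv = T*v + ε T*(x¹ ∂v/∂x♯) + ε O_s(ε)`: the
remainder `S_N = Bv − T*v − ε T*w` satisfies `N ‖S_N‖_{L²(0,1)} → 0`. -/
theorem approximation_B_by_Tstar (v v₁ : ℝ → ℝ → ℝ)
    (hv : Continuous (fun p : ℝ × ℝ => v p.1 p.2))
    (hper : ∀ x y : ℝ, v x (y + 1) = v x y)
    (hd : ∀ x y : ℝ, HasDerivAt (fun s => v s y) (v₁ x y) x)
    (hv₁ : Continuous (fun p : ℝ × ℝ => v₁ p.1 p.2)) :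
    Tendsto (fun N : ℕ => (N : ℝ) *
        Real.sqrt (∫ x in Ioo (0 : ℝ) 1,
          (smoothAdj N v x - twoScaleAdj N v x
            - (1 / (N : ℝ)) * twoScaleAdj N (fun xs y => y * v₁ xs y) x) ^ 2))
      atTop (nhds 0) :=
  approximation_B_by_Tstar_general v v₁ (fun x _ => hper x)
    (fun x _ y _ => (hd x y).hasDerivWithinAt) hv₁.continuousOn
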